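/- arXiv:1304.1274 — 2 statements merged into one kernel-verified Lean document; each statement's English description precedes it below -/
import Mathlib

section
/- Let G be a group acting on a set X, and let A ⊆ Y ⊆ X with A nonempty. Suppose there exist elements a, a₀, a₁, a₂, a₃ ∈ G such that Y = A ∪ a • A, the sets a₀ • A, a₁ • A, a₂ • A, a₃ • A are pairwise disjoint, and Y is invariant under a, a₀, a₁, a₂, a₃. Then a₀ a a₁⁻¹ and a₂ a a₃⁻¹ freely generate a free subgroup of G of rank 2; that is, the group homomorphism from the free group on two generators to G sending the generators to a₀ a a₁⁻¹ and a₂ a a₃⁻¹ is injective. -/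
open Pointwise

/-!
Since `Y = A ∪ a • A` and `a • Y = Y`, both `a` and `a⁻¹` map `Y \ A` into `A`. Conjugating by
elements preserving `Y`, the element `g = b * a * c⁻¹` maps `Y \ c • A` into `b • A`, while `g⁻¹`
maps `Y \ b • A` into `c • A`. When all the translates `b • A`, `c • A` are disjoint, this is the
ping-pong configuration on the invariant set `Y`, with `b • A` attracting for `g` and `c • A`
attracting for `g⁻¹`.
-/

section PingPong

open scoped Function

universe u v

variable {ι : Type u} {G : Type v} {α : Type*} [Nontrivial ι] [Group G] [MulAction G α]

-- `FreeGroup.injective_lift_of_ping_pong` needs `ι` and `G` to live in the same universe.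
theorem freeGroup_injective_lift_of_ping_pong (g : ι → G) (U V : ι → Set α)
    (hUne : ∀ i, (U i).Nonempty) (hUU : Pairwise (Disjoint on U)) (hVV : Pairwise (Disjoint on V))
    (hUV : ∀ i j, Disjoint (U i) (V j))
    (hU : ∀ i, g i • (V i)ᶜ ⊆ U i) (hV : ∀ i, (g i)⁻¹ • (U i)ᶜ ⊆ V i) :
    Function.Injective (FreeGroup.lift g) := by
  let g' : ULift.{v} ι → ULift.{u} G := fun i => ULift.up (g i.down)
  have hg' : Function.Injective (FreeGroup.lift g') :=
    FreeGroup.injective_lift_of_ping_pong g' (U ∘ ULift.down) (V ∘ ULift.down)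
      (fun i => hUne i.down) (hUU.comp_of_injective ULift.down_injective)
      (hVV.comp_of_injective ULift.down_injective) (fun i j => hUV i.down j.down)
      (fun i => hU i.down) (fun i => hV i.down)
  have hlift : FreeGroup.lift g = MulEquiv.ulift.toMonoidHom.comp
      ((FreeGroup.lift g').comp (FreeGroup.freeGroupCongr Equiv.ulift.symm).toMonoidHom) := by
    ext i
    rfl
  rw [hlift]
  exact MulEquiv.ulift.injective.comp (hg'.comp (MulEquiv.injective _))

theorem freeGroup_injective_lift_of_ping_pong_on (g : ι → G) (S : Set α) (U V : ι → Set α)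
    (hg : ∀ i, g i • S = S) (hUne : ∀ i, (S ∩ U i).Nonempty)
    (hUU : Pairwise (Disjoint on U)) (hVV : Pairwise (Disjoint on V))
    (hUV : ∀ i j, Disjoint (U i) (V j))
    (hU : ∀ i, g i • (S \ V i) ⊆ U i) (hV : ∀ i, (g i)⁻¹ • (S \ U i) ⊆ V i) :
    Function.Injective (FreeGroup.lift g) := by
  let gS : ι → MulAction.stabilizer G S := fun i => ⟨g i, hg i⟩
  let restrict : Set α → Set S := fun T => Subtype.val ⁻¹' T
  have hgS : Function.Injective (FreeGroup.lift gS) := by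
    refine freeGroup_injective_lift_of_ping_pong gS (restrict ∘ U) (restrict ∘ V)
      (fun i => Subtype.preimage_coe_nonempty.mpr (hUne i))
      (fun i j hij => (hUU hij).preimage _) (fun i j hij => (hVV hij).preimage _)
      (fun i j => (hUV i j).preimage _) (fun i => ?_) (fun i => ?_)
    · rintro _ ⟨x, hx, rfl⟩
      exact hU i (Set.smul_mem_smul_set ⟨x.2, hx⟩)
    · rintro _ ⟨x, hx, rfl⟩
      exact hV i (Set.smul_mem_smul_set ⟨x.2, hx⟩)
  have hlift : FreeGroup.lift g =
      (MulAction.stabilizer G S).subtype.comp (FreeGroup.lift gS) := by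
    ext i
    simp [gS]
  rw [hlift]
  exact (Subgroup.subtype_injective _).comp hgS

end PingPong

section Translates

variable {G X : Type*} [Group G] [MulAction G X] {A Y : Set X} {a b c : G}

theorem smul_sdiff_subset_of_subset_union_smul (hY : Y ⊆ A ∪ a • A) (ha : a • Y ⊆ Y) :
    a • (Y \ A) ⊆ A := by
  rw [Set.smul_set_sdiff, Set.sdiff_subset_iff, Set.union_comm]
  exact ha.trans hY

theorem inv_smul_sdiff_subset_of_subset_union_smul (hY : Y ⊆ A ∪ a • A) :
    a⁻¹ • (Y \ A) ⊆ A :=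
  Set.subset_smul_set_iff.mp (Set.sdiff_subset_iff.mpr hY)

theorem mul_mul_inv_smul_sdiff_subset (ha : a • (Y \ A) ⊆ A) (hc : c • Y = Y) :
    (b * a * c⁻¹) • (Y \ c • A) ⊆ b • A :=
  calc (b * a * c⁻¹) • (Y \ c • A)
    _ = b • a • (Y \ A) := by
      nth_rw 1 [← hc]
      rw [← Set.smul_set_sdiff, mul_smul, inv_smul_smul, mul_smul]
    _ ⊆ b • A := Set.smul_set_mono ha

end Translates

open scoped Function in
theorem stmt_4_general {ι G X : Type*} [Nontrivial ι] [Group G] [MulAction G X]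
    (A Y : Set X) (hA : A.Nonempty) (a : G) (b c : ι → G) (hY : Y = A ∪ a • A)
    (hbb : Pairwise (Disjoint on fun i => b i • A)) (hcc : Pairwise (Disjoint on fun i => c i • A))
    (hbc : ∀ i j, Disjoint (b i • A) (c j • A))
    (ha : a • Y = Y) (hb : ∀ i, b i • Y = Y) (hc : ∀ i, c i • Y = Y) :
    Function.Injective (FreeGroup.lift fun i => b i * a * (c i)⁻¹) := by
  have hg : ∀ i, (b i * a * (c i)⁻¹) • Y = Y := fun i => by
    rw [mul_smul, inv_smul_eq_iff.mpr (hc i).symm, mul_smul, ha, hb]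
  have hbA : ∀ i, b i • A ⊆ Y := fun i =>
    hb i ▸ Set.smul_set_mono (hY ▸ Set.subset_union_left)
  refine freeGroup_injective_lift_of_ping_pong_on _ Y (fun i => b i • A) (fun i => c i • A) hg
    (fun i => hA.smul_set.mono (Set.subset_inter (hbA i) subset_rfl)) hbb hcc hbc
    (fun i => ?_) (fun i => ?_)
  · exact mul_mul_inv_smul_sdiff_subset
      (smul_sdiff_subset_of_subset_union_smul hY.subset ha.subset) (hc i)
  · have hinv : (b i * a * (c i)⁻¹)⁻¹ = c i * a⁻¹ * (b i)⁻¹ := by group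
    rw [hinv]
    exact mul_mul_inv_smul_sdiff_subset
      (inv_smul_sdiff_subset_of_subset_union_smul hY.subset) (hb i)

theorem stmt_4 {G X : Type*} [Group G] [MulAction G X]
    (A Y : Set X) (hA : A.Nonempty) (hAY : A ⊆ Y)
    (a a0 a1 a2 a3 : G)
    (hY : Y = A ∪ a • A)
    (h01 : Disjoint (a0 • A) (a1 • A))
    (h02 : Disjoint (a0 • A) (a2 • A))
    (h03 : Disjoint (a0 • A) (a3 • A))
    (h12 : Disjoint (a1 • A) (a2 • A))
    (h13 : Disjoint (a1 • A) (a3 • A))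
    (h23 : Disjoint (a2 • A) (a3 • A))
    (ha : a • Y = Y) (ha0 : a0 • Y = Y) (ha1 : a1 • Y = Y)
    (ha2 : a2 • Y = Y) (ha3 : a3 • Y = Y) :
    Function.Injective
      (FreeGroup.lift (fun x : Bool =>
        if x then a2 * a * a3⁻¹ else a0 * a * a1⁻¹) : FreeGroup Bool →* G) := by
  convert stmt_4_general A Y hA a (fun x : Bool => cond x a2 a0) (fun x => cond x a3 a1) hY
    (by simp [Pairwise, Function.onFun, h02, h02.symm])
    (by simp [Pairwise, Function.onFun, h13, h13.symm])
    (by simp [h01, h03, h12.symm, h23]) ha (by simp [ha0, ha2]) (by simp [ha1, ha3]) using 4 with x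
  cases x <;> rfl
end

section
/- Let F be a group acting freely on a nonempty set Z (for every h ∈ F with h ≠ 1 and every z ∈ Z, h • z ≠ z), and suppose a, b ∈ F are a free basis of F, i.e., the group homomorphism from the free group on two generators to F sending the generators to a and b is an isomorphism. Then there exists a subset A ⊆ Z such that Z = A ∪ a • A and the three sets A, b • A, b² • A are pairwise disjoint. -/
open Pointwise

/-!
Since the action of the free group is free, identifying each orbit with the group gives an
equivariant map from `Z` to the free group acting on itself by left multiplication, and the desired
set can be pulled back along it. In the free group, take the reduced words whose first letter is
`a` or `a⁻¹`: multiplying any other word by `a⁻¹` creates such a first letter without cancellation,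
while multiplying a word of the set by a positive power of `b` makes `b` the first letter.
-/

open scoped Function

section FreeAction

variable {G Z : Type*} [Group G] [MulAction G Z]

theorem nonempty_mulActionHom_self [IsCancelSMul G Z] : Nonempty (Z →[G] G) := by
  let basepoint (z : Z) : Z := (Quotient.mk (MulAction.orbitRel G Z) z).out
  have basepoint_smul (g : G) (z : Z) : basepoint (g • z) = basepoint z :=
    congrArg Quotient.out (Quotient.sound ⟨g, rfl⟩)
  have exists_smul_basepoint (z : Z) : ∃ g : G, g • basepoint z = z :=
    (MulAction.orbitRel G Z).symm (Quotient.mk_out z)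
  choose coord coord_smul using exists_smul_basepoint
  refine ⟨⟨coord, fun g z ↦ IsCancelSMul.right_cancel _ _ (basepoint z) ?_⟩⟩
  calc coord (g • z) • basepoint z
      = g • z := by rw [← basepoint_smul g, coord_smul]
    _ = (g • coord z) • basepoint z := by rw [smul_assoc, coord_smul]

theorem pairwise_disjoint_zpow_smul {g : G} {A : Set Z}
    (h : ∀ n : ℕ, Disjoint A (g ^ (n + 1) • A)) :
    Pairwise (Disjoint on fun n : ℤ ↦ g ^ n • A) := by
  rw [pairwise_disjoint_on]
  intro m n hmn
  obtain ⟨k, rfl⟩ := Int.lt.dest hmn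
  rw [zpow_add, mul_smul, Set.disjoint_smul_set, zpow_natCast]
  exact h k

end FreeAction

section FirstLetter

open FreeGroup (of startsWith)

variable {α : Type*} [DecidableEq α]

/-- The elements of the free group whose reduced word begins with the generator `i` or its
inverse: the model, in the free group itself, of the set `A` to be constructed. -/
def startsWithGenerator (i : α) : Set (FreeGroup α) :=
  ⋃ ε, startsWith (i, ε)

theorem disjoint_startsWithGenerator_startsWith {i j : α} (hji : j ≠ i) (ε : Bool) :
    Disjoint (startsWithGenerator i) (startsWith (j, ε)) := by
  simp [startsWithGenerator, Set.disjoint_iUnion_left, hji.symm]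

theorem startsWithGenerator_union_of_smul_eq_univ (i : α) :
    startsWithGenerator i ∪ of i • startsWithGenerator i = Set.univ := by
  refine Set.eq_univ_of_forall fun w ↦ or_iff_not_imp_left.mpr fun hw ↦ ?_
  have not_startsWith_of : w ∉ startsWith (i, true) := fun h ↦ hw (Set.mem_iUnion_of_mem true h)
  rw [Set.mem_smul_set_iff_inv_smul_mem]
  exact Set.mem_iUnion_of_mem false (FreeGroup.startsWith_mk_mul w not_startsWith_of)

theorem of_pow_succ_mul_mem_startsWith {j : α} {w : FreeGroup α}
    (hw : w ∉ startsWith (j, false)) (n : ℕ) : of j ^ (n + 1) * w ∈ startsWith (j, true) := by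
  induction n with
  | zero =>
    rw [zero_add, pow_one]
    exact FreeGroup.startsWith_mk_mul w hw
  | succ n ih =>
    rw [pow_succ', mul_assoc]
    have disjoint_letters : Disjoint (startsWith (j, true)) (startsWith (j, false)) := by simp
    exact FreeGroup.startsWith_mk_mul _ (disjoint_letters.notMem_of_mem_left ih)

theorem disjoint_startsWithGenerator_of_pow_smul {i j : α} (hji : j ≠ i) (n : ℕ) :
    Disjoint (startsWithGenerator i) (of j ^ (n + 1) • startsWithGenerator i) := by
  refine (disjoint_startsWithGenerator_startsWith hji true).mono_right ?_
  rintro _ ⟨w, hw, rfl⟩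
  exact of_pow_succ_mul_mem_startsWith
    ((disjoint_startsWithGenerator_startsWith hji false).notMem_of_mem_left hw) n

end FirstLetter

theorem exists_union_smul_and_pairwise_disjoint_zpow_smul {α Z : Type*}
    [MulAction (FreeGroup α) Z] [IsCancelSMul (FreeGroup α) Z] (i : α) :
    ∃ A : Set Z, Set.univ = A ∪ FreeGroup.of i • A ∧
      ∀ j ≠ i, Pairwise (Disjoint on fun n : ℤ ↦ FreeGroup.of j ^ n • A) := by
  classical
  obtain ⟨f⟩ := nonempty_mulActionHom_self (G := FreeGroup α) (Z := Z)
  refine ⟨f ⁻¹' startsWithGenerator i, ?_, fun j hji ↦ pairwise_disjoint_zpow_smul fun n ↦ ?_⟩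
  · rw [← Group.preimage_smul_set, ← Set.preimage_union,
      startsWithGenerator_union_of_smul_eq_univ, Set.preimage_univ]
  · rw [← Group.preimage_smul_set]
    exact (disjoint_startsWithGenerator_of_pow_smul hji n).preimage f

theorem stmt_10_general {α F Z : Type*} [Group F] [MulAction F Z] (g : α → F)
    (hfree : ∀ w : FreeGroup α, w ≠ 1 → ∀ z : Z, FreeGroup.lift g w • z ≠ z) (i : α) :
    ∃ A : Set Z, Set.univ = A ∪ g i • A ∧
      ∀ j ≠ i, Pairwise (Disjoint on fun n : ℤ ↦ g j ^ n • A) := by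
  let : MulAction (FreeGroup α) Z := MulAction.compHom Z (FreeGroup.lift g)
  have : IsCancelSMul (FreeGroup α) Z :=
    isCancelSMul_iff_eq_one_of_smul_eq.mpr fun w z ↦ not_imp_not.mp fun hw ↦ hfree w hw z
  have smul_eq (w : FreeGroup α) (A : Set Z) : w • A = FreeGroup.lift g w • A := rfl
  simpa only [smul_eq, map_zpow, FreeGroup.lift_apply_of] using
    exists_union_smul_and_pairwise_disjoint_zpow_smul (Z := Z) i

theorem stmt_10 {F Z : Type*} [Group F] [MulAction F Z] [Nonempty Z]
    (hfree : ∀ h : F, h ≠ 1 → ∀ z : Z, h • z ≠ z)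
    (a b : F)
    (hbasis : Function.Bijective
      (FreeGroup.lift (fun x : Bool => if x then b else a) : FreeGroup Bool →* F)) :
    ∃ A : Set Z,
      (Set.univ : Set Z) = A ∪ a • A ∧
      Disjoint A (b • A) ∧
      Disjoint A ((b ^ 2) • A) ∧
      Disjoint (b • A) ((b ^ 2) • A) := by
  obtain ⟨A, cover, disjoint⟩ := stmt_10_general _
    (fun w hw ↦ hfree _ ((map_ne_one_iff _ hbasis.injective).mpr hw)) false
  have disjoint_zpow (m n : ℤ) : m ≠ n → Disjoint (b ^ m • A) (b ^ n • A) :=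
    @disjoint true nofun m n
  exact ⟨A, cover, by simpa using disjoint_zpow 0 1, by simpa using disjoint_zpow 0 2,
    by simpa using disjoint_zpow 1 2⟩
end
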